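/- arXiv:1909.02929 — 5 statements merged into one kernel-verified Lean document; each statement's English description precedes it below -/
import Mathlib

section
/- For every λ > 0, r > 0 and α > 2, the second moment of the beta negative binomial distribution satisfies ∑_{y=0}^{∞} y² · p(y; λ, r, α) = ((α+r−1)/(α−2))·λ + ((r+1)(α−1)/(r(α−2)))·λ². -/
noncomputable def betaFn (a b : ℝ) : ℝ := Real.Gamma a * Real.Gamma b / Real.Gamma (a + b)

noncomputable def bnbPmf (lam r a : ℝ) (y : ℕ) : ℝ :=
  Real.Gamma ((y : ℝ) + r) / (Real.Gamma ((y : ℝ) + 1) * Real.Gamma r) *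
    (betaFn (a + r) ((a - 1) * lam / r + (y : ℝ)) / betaFn a ((a - 1) * lam / r))

/-!
A beta negative binomial variable is a negative binomial one whose success probability `x` is
itself beta distributed. For fixed `x` its normalisation is the binomial series
`∑ multichoose r n * (1 - x) ^ n = x ^ (-r)`, and integrating it against the beta density gives
Gauss's summation `∑ multichoose r n * B(a + r, b + n) = B(a, b)`. Multiplying the `n`-th weight by
the falling factorial `n (n - 1) ⋯ (n - k + 1)` turns it, up to the constant
`r (r + 1) ⋯ (r + k - 1)`, into the `(n - k)`-th weight with parameters `(r + k, a - k, b + k)`, so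
the same summation yields every factorial moment; the second moment is the sum of the first two.
-/

open MeasureTheory Set

lemma factorial_mul_multichoose {R : Type*} [Ring R] [BinomialRing R] (r : R) (n : ℕ) :
    (n.factorial : R) * Ring.multichoose r n = (ascPochhammer R n).eval r := by
  rw [← nsmul_eq_mul, Ring.factorial_nsmul_multichoose_eq_ascPochhammer,
    Polynomial.ascPochhammer_smeval_eq_eval]

lemma descFactorial_mul_multichoose_add {R : Type*} [CommRing R] [BinomialRing R] (r : R)
    (n k : ℕ) :
    ((n + k).descFactorial k : R) * Ring.multichoose r (n + k) =
      (ascPochhammer R k).eval r * Ring.multichoose (r + k) n := by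
  have hfactorial : (n.factorial : R) * (n + k).descFactorial k = (n + k).factorial := by
    rw [← Nat.cast_mul, ← Nat.factorial_mul_descFactorial (Nat.le_add_left k n),
      Nat.add_sub_cancel]
  have hsplit : (ascPochhammer R (n + k)).eval r =
      (ascPochhammer R k).eval r * (ascPochhammer R n).eval (r + k) := by
    simp [add_comm n k, ← ascPochhammer_mul]
  have := BinomialRing.toIsAddTorsionFree (R := R)
  refine nsmul_right_injective n.factorial_ne_zero ?_
  simp only [nsmul_eq_mul]
  rw [← mul_assoc, hfactorial, factorial_mul_multichoose, hsplit, ← factorial_mul_multichoose _ n]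
  ring

lemma ascPochhammer_nonneg {S : Type*} [Semiring S] [PartialOrder S] [IsOrderedRing S] {s : S}
    (hs : 0 ≤ s) (n : ℕ) : 0 ≤ (ascPochhammer S n).eval s := by
  induction n with
  | zero => simp
  | succ n ih =>
    rw [ascPochhammer_succ_eval]
    exact mul_nonneg ih (add_nonneg hs n.cast_nonneg)

lemma multichoose_nonneg {R : Type*} [Ring R] [LinearOrder R] [IsStrictOrderedRing R]
    [BinomialRing R] {r : R} (hr : 0 ≤ r) (n : ℕ) : 0 ≤ Ring.multichoose r n := by
  have h : 0 ≤ (n.factorial : R) * Ring.multichoose r n := by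
    rw [factorial_mul_multichoose]
    exact ascPochhammer_nonneg hr n
  exact nonneg_of_mul_nonneg_right h (by positivity)

lemma hasSum_multichoose_mul_pow (r : ℝ) {x : ℝ} (hx : |x| < 1) :
    HasSum (fun n : ℕ ↦ Ring.multichoose r n * x ^ n) ((1 - x) ^ (-r)) := by
  have h := (Real.one_div_one_sub_rpow_hasFPowerSeriesOnBall_zero r).hasSum (y := x)
    (by simpa [enorm_eq_nnnorm, ← NNReal.coe_lt_coe] using hx)
  have hx1 : 0 ≤ 1 - x := by linarith [le_abs_self x]
  simpa [FormalMultilinearSeries.ofScalars_apply_eq, Ring.multichoose_eq, mul_comm,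
    Real.rpow_neg hx1] using h

lemma Gamma_natCast_add {r : ℝ} (hr : ∀ m : ℕ, r ≠ -m) (n : ℕ) :
    Real.Gamma (n + r) = (ascPochhammer ℝ n).eval r * Real.Gamma r := by
  induction n with
  | zero => simp
  | succ n ih =>
    have hrn : n + r ≠ 0 := fun h ↦ hr n (by linarith)
    rw [show ((n + 1 : ℕ) : ℝ) + r = (n + r) + 1 by push_cast; ring, Real.Gamma_add_one hrn, ih,
      ascPochhammer_succ_eval]
    ring

lemma ne_neg_natCast_of_pos {R : Type*} [Ring R] [PartialOrder R] [IsOrderedRing R] {r : R}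
    (hr : 0 < r) (m : ℕ) : r ≠ -m :=
  ((neg_nonpos.2 m.cast_nonneg).trans_lt hr).ne'

lemma Gamma_natCast_add_div_eq_multichoose {r : ℝ} (hr : ∀ m : ℕ, r ≠ -m) (n : ℕ) :
    Real.Gamma (n + r) / (Real.Gamma (n + 1) * Real.Gamma r) = Ring.multichoose r n := by
  have hΓ : Real.Gamma r ≠ 0 := Real.Gamma_ne_zero hr
  rw [Gamma_natCast_add hr, Real.Gamma_nat_eq_factorial, ← factorial_mul_multichoose]
  field_simp

lemma betaFn_pos {a b : ℝ} (ha : 0 < a) (hb : 0 < b) : 0 < betaFn a b :=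
  ProbabilityTheory.beta_pos ha hb

lemma betaFn_sub_natCast_add_natCast {a b : ℝ} {k : ℕ} (ha : k < a) (hb : 0 < b) :
    betaFn (a - k) (b + k) =
      (ascPochhammer ℝ k).eval b / (ascPochhammer ℝ k).eval (a - k) * betaFn a b := by
  have hΓa : Real.Gamma a = (ascPochhammer ℝ k).eval (a - k) * Real.Gamma (a - k) := by
    rw [← Gamma_natCast_add (ne_neg_natCast_of_pos (sub_pos.2 ha)), add_sub_cancel]
  have hΓb : Real.Gamma (b + k) = (ascPochhammer ℝ k).eval b * Real.Gamma b := by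
    rw [add_comm, Gamma_natCast_add (ne_neg_natCast_of_pos hb)]
  have hpoch : (ascPochhammer ℝ k).eval (a - k) ≠ 0 := (ascPochhammer_pos k _ (sub_pos.2 ha)).ne'
  rw [betaFn, betaFn, show a - k + (b + k) = a + b by ring, hΓa, hΓb]
  field_simp

lemma lintegral_rpow_mul_one_sub_rpow {a b : ℝ} (ha : 0 < a) (hb : 0 < b) :
    ∫⁻ x in Ioo (0 : ℝ) 1, ENNReal.ofReal (x ^ (a - 1) * (1 - x) ^ (b - 1)) =
      ENNReal.ofReal (betaFn a b) := by
  have hB : 0 < betaFn a b := betaFn_pos ha hb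
  have hone : ∫⁻ x in Ioo (0 : ℝ) 1,
      ENNReal.ofReal (1 / betaFn a b * x ^ (a - 1) * (1 - x) ^ (b - 1)) = 1 :=
    ProbabilityTheory.lintegral_betaPDF.symm.trans
      (ProbabilityTheory.lintegral_betaPDF_eq_one ha hb)
  rw [← mul_one (ENNReal.ofReal (betaFn a b)), ← hone, ← lintegral_const_mul _ (by fun_prop)]
  refine lintegral_congr fun x ↦ ?_
  rw [← ENNReal.ofReal_mul hB.le]
  congr 1
  field_simp

lemma tsum_ofReal_mul_betaFn {c : ℕ → ℝ} {f : ℝ → ℝ} {a b : ℝ} (hc : ∀ n, 0 ≤ c n)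
    (hf : ∀ x ∈ Ioo (0 : ℝ) 1, HasSum (fun n ↦ c n * (1 - x) ^ n) (f x))
    (ha : 0 < a) (hb : 0 < b) :
    ∑' n, ENNReal.ofReal (c n * betaFn a (b + n)) =
      ∫⁻ x in Ioo (0 : ℝ) 1, ENNReal.ofReal (f x * (x ^ (a - 1) * (1 - x) ^ (b - 1))) := by
  have hterm (n : ℕ) : ENNReal.ofReal (c n * betaFn a (b + n)) =
      ∫⁻ x in Ioo (0 : ℝ) 1,
        ENNReal.ofReal (c n * (x ^ (a - 1) * (1 - x) ^ (b + n - 1))) := by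
    simp_rw [ENNReal.ofReal_mul (hc n)]
    rw [lintegral_const_mul _ (by fun_prop), lintegral_rpow_mul_one_sub_rpow ha (by positivity)]
  simp_rw [hterm]
  rw [← lintegral_tsum fun n ↦ by fun_prop]
  refine setLIntegral_congr_fun measurableSet_Ioo fun x hx ↦ ?_
  have hx1 : 0 < 1 - x := sub_pos.2 hx.2
  have hx0 : 0 < x := hx.1
  have hsum : HasSum (fun n : ℕ ↦ c n * (x ^ (a - 1) * (1 - x) ^ (b + n - 1)))
      (f x * (x ^ (a - 1) * (1 - x) ^ (b - 1))) := by
    refine ((hf x hx).mul_right _).congr_fun fun n ↦ ?_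
    rw [add_sub_right_comm, Real.rpow_add_natCast hx1.ne']
    ring
  rw [← hsum.tsum_eq, ENNReal.ofReal_tsum_of_nonneg
    (fun n ↦ mul_nonneg (hc n) (by positivity)) hsum.summable]

lemma hasSum_of_tsum_ofReal_eq {ι : Type*} {f : ι → ℝ} {s : ℝ} (hf : ∀ i, 0 ≤ f i) (hs : 0 ≤ s)
    (h : ∑' i, ENNReal.ofReal (f i) = ENNReal.ofReal s) : HasSum f s := by
  have hsum := ENNReal.hasSum_toReal (h.trans_ne ENNReal.ofReal_ne_top)
  rw [← ENNReal.tsum_toReal_eq fun _ ↦ ENNReal.ofReal_ne_top, h, ENNReal.toReal_ofReal hs] at hsum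
  simpa only [ENNReal.toReal_ofReal (hf _)] using hsum

lemma hasSum_multichoose_mul_betaFn {r a b : ℝ} (hr : 0 ≤ r) (ha : 0 < a) (hb : 0 < b) :
    HasSum (fun n : ℕ ↦ Ring.multichoose r n * betaFn (a + r) (b + n)) (betaFn a b) := by
  have hbinomial : ∀ x ∈ Ioo (0 : ℝ) 1,
      HasSum (fun n ↦ Ring.multichoose r n * (1 - x) ^ n) (x ^ (-r)) := fun x hx ↦ by
    simpa using hasSum_multichoose_mul_pow r (x := 1 - x)
      (by rw [abs_lt]; constructor <;> linarith [hx.1, hx.2])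
  refine hasSum_of_tsum_ofReal_eq (fun n ↦ mul_nonneg (multichoose_nonneg hr n)
    (betaFn_pos (by positivity) (by positivity)).le) (betaFn_pos ha hb).le ?_
  rw [tsum_ofReal_mul_betaFn (multichoose_nonneg hr) hbinomial (by positivity) hb,
    ← lintegral_rpow_mul_one_sub_rpow ha hb]
  refine setLIntegral_congr_fun measurableSet_Ioo fun x hx ↦ ?_
  rw [← mul_assoc, ← Real.rpow_add hx.1, show -r + (a + r - 1) = a - 1 by ring]

lemma hasSum_descFactorial_mul_multichoose_mul_betaFn {r a b : ℝ} {k : ℕ} (hr : 0 ≤ r)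
    (ha : k < a) (hb : 0 < b) :
    HasSum (fun n : ℕ ↦ n.descFactorial k * (Ring.multichoose r n * betaFn (a + r) (b + n)))
      ((ascPochhammer ℝ k).eval r * betaFn (a - k) (b + k)) := by
  have hzero : ∑ n ∈ Finset.range k,
      (n.descFactorial k : ℝ) * (Ring.multichoose r n * betaFn (a + r) (b + n)) = 0 :=
    Finset.sum_eq_zero fun n hn ↦ by
      rw [Nat.descFactorial_of_lt (Finset.mem_range.1 hn), Nat.cast_zero, zero_mul]
  rw [← hasSum_nat_add_iff' k, hzero, sub_zero]
  have hshift := (hasSum_multichoose_mul_betaFn (r := r + k) (b := b + k) (by positivity)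
    (sub_pos.2 ha) (by positivity)).mul_left ((ascPochhammer ℝ k).eval r)
  refine hshift.congr_fun fun n ↦ ?_
  rw [← mul_assoc, descFactorial_mul_multichoose_add, sub_add_add_cancel, mul_assoc,
    Nat.cast_add, add_assoc b, add_comm (k : ℝ)]

lemma hasSum_descFactorial_mul_bnbPmf {lam r a : ℝ} {k : ℕ} (hlam : 0 < lam) (hr : 0 < r)
    (ha : 1 < a) (hk : k < a) :
    HasSum (fun y : ℕ ↦ y.descFactorial k * bnbPmf lam r a y)
      ((ascPochhammer ℝ k).eval r * (ascPochhammer ℝ k).eval ((a - 1) * lam / r) /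
        (ascPochhammer ℝ k).eval (a - k)) := by
  set b := (a - 1) * lam / r with hb_def
  have hb : 0 < b := div_pos (mul_pos (sub_pos.2 ha) hlam) hr
  have hB : betaFn a b ≠ 0 := (betaFn_pos (by linarith) hb).ne'
  have hvalue : (ascPochhammer ℝ k).eval r * betaFn (a - k) (b + k) / betaFn a b =
      (ascPochhammer ℝ k).eval r * (ascPochhammer ℝ k).eval b /
        (ascPochhammer ℝ k).eval (a - k) := by
    rw [betaFn_sub_natCast_add_natCast hk hb]
    field_simp
  rw [← hvalue]
  refine ((hasSum_descFactorial_mul_multichoose_mul_betaFn hr.le hk hb).div_const _).congr_fun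
    fun y ↦ ?_
  rw [bnbPmf, Gamma_natCast_add_div_eq_multichoose (ne_neg_natCast_of_pos hr), ← hb_def]
  ring

theorem bnb_second_moment (lam r a : ℝ) (hlam : 0 < lam) (hr : 0 < r) (ha : 2 < a) :
    ∑' y : ℕ, (y : ℝ) ^ 2 * bnbPmf lam r a y =
      ((a + r - 1) / (a - 2)) * lam + ((r + 1) * (a - 1) / (r * (a - 2))) * lam ^ 2 := by
  have ha1 : 0 < a - 1 := by linarith
  have ha2 : 0 < a - 2 := by linarith
  have hfirst := hasSum_descFactorial_mul_bnbPmf (a := a) (k := 1) hlam hr (by linarith)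
    (by norm_num; linarith)
  have hsecond := hasSum_descFactorial_mul_bnbPmf (a := a) (k := 2) hlam hr (by linarith)
    (by exact_mod_cast ha)
  have hsq (y : ℕ) : (y : ℝ) ^ 2 = y.descFactorial 2 + y.descFactorial 1 := by
    rw [Nat.cast_descFactorial_two, Nat.descFactorial_one]
    ring
  have heval_one (x : ℝ) : (ascPochhammer ℝ 1).eval x = x := by simp
  have heval_two (x : ℝ) : (ascPochhammer ℝ 2).eval x = x * (x + 1) := by
    simp [ascPochhammer_succ_eval]
  simp_rw [hsq, add_mul]
  rw [(hsecond.add hfirst).tsum_eq]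
  simp only [heval_one, heval_two, Nat.cast_one, Nat.cast_ofNat, show a - 2 + 1 = a - 1 by ring]
  field_simp
  ring
end

section
/- Let r > 0, α > 1 and λ₁ ≥ λ₂ > 0. Then the beta negative binomial distribution with mean λ₁ is stochastically greater than the one with mean λ₂: for every z ∈ ℕ, ∑_{y=0}^{z} p(y; λ₁, r, α) ≤ ∑_{y=0}^{z} p(y; λ₂, r, α). -/
/-!
If the success probability `p` of a negative binomial variable has the beta distribution with
parameters `α` and `b = (α - 1) λ / r`, then the variable is beta negative binomial. The negative
binomial distribution function is increasing in `p`, since its derivative telescopes to a single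
nonnegative term. Raising `λ` raises `b`, which multiplies the beta density by a decreasing function
of `p`, up to normalisation; by Chebyshev's integral inequality this lowers the mean of every
increasing function of `p`.
-/

open MeasureTheory ProbabilityTheory Set

theorem integral_mul_le_integral_mul_integral_of_antivaryOn {Ω : Type*} [MeasurableSpace Ω]
    {μ : Measure Ω} [IsProbabilityMeasure μ] {f g : Ω → ℝ} {s : Set Ω} (hfg : AntivaryOn f g s)
    (hs : ∀ᵐ ω ∂μ, ω ∈ s) (hf : Integrable f μ) (hg : Integrable g μ)
    (hmul : Integrable (fun ω ↦ f ω * g ω) μ) :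
    ∫ ω, f ω * g ω ∂μ ≤ (∫ ω, f ω ∂μ) * ∫ ω, g ω ∂μ := by
  set F := ∫ ω, f ω ∂μ
  set G := ∫ ω, g ω ∂μ
  set I := ∫ ω, f ω * g ω ∂μ
  -- Integrate `(f ω' - f ω) * (g ω' - g ω) ≤ 0` first over `ω'`, then over `ω`.
  have inner : ∀ ω ∈ s, I - g ω * F - f ω * G + f ω * g ω ≤ 0 := fun ω hω ↦ by
    calc I - g ω * F - f ω * G + f ω * g ω
        = ∫ ω', (f ω' * g ω' - g ω * f ω' - f ω * g ω' + f ω * g ω) ∂μ := by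
          rw [integral_add (by fun_prop) (by fun_prop), integral_sub (by fun_prop) (by fun_prop),
            integral_sub hmul (by fun_prop), integral_const_mul, integral_const_mul,
            integral_const, probReal_univ, one_smul]
      _ ≤ 0 := integral_nonpos_of_ae <| hs.mono fun ω' hω' ↦ by
          dsimp only [Pi.zero_apply]
          linarith [antivaryOn_iff_forall_mul_nonpos.1 hfg hω hω']
  have outer : ∫ ω, (I - g ω * F - f ω * G + f ω * g ω) ∂μ ≤ 0 :=
    integral_nonpos_of_ae (hs.mono inner)
  rw [integral_add (by fun_prop) hmul, integral_sub (by fun_prop) (by fun_prop),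
    integral_sub (by fun_prop) (by fun_prop), integral_mul_const, integral_mul_const,
    integral_const, probReal_univ, one_smul] at outer
  linarith

section BetaMeasure

variable {u v s t : ℝ} {E : Type*} [NormedAddCommGroup E] [NormedSpace ℝ E]

theorem measurable_betaPDF (u v : ℝ) : Measurable (betaPDF u v) :=
  (measurable_betaPDFReal u v).ennreal_ofReal

theorem toReal_betaPDF (hu : 0 < u) (hv : 0 < v) (x : ℝ) :
    (betaPDF u v x).toReal = betaPDFReal u v x := by
  refine ENNReal.toReal_ofReal ?_
  by_cases hx : 0 < x ∧ x < 1
  · exact (betaPDFReal_pos hx.1 hx.2 hu hv).le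
  · rw [betaPDFReal, if_neg hx]

theorem ae_betaMeasure_mem_Ioo (u v : ℝ) : ∀ᵐ x ∂betaMeasure u v, x ∈ Ioo (0 : ℝ) 1 := by
  refine (ae_withDensity_iff (measurable_betaPDF u v)).2 (.of_forall fun x hx ↦ ?_)
  contrapose! hx with hx_mem
  exact (congrArg ENNReal.ofReal (if_neg hx_mem)).trans ENNReal.ofReal_zero

theorem integrable_betaMeasure_iff (hu : 0 < u) (hv : 0 < v) {g : ℝ → E} :
    Integrable g (betaMeasure u v) ↔ Integrable fun x ↦ betaPDFReal u v x • g x := by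
  rw [betaMeasure, integrable_withDensity_iff_integrable_smul' (measurable_betaPDF u v)
    (.of_forall fun _ ↦ ENNReal.ofReal_lt_top)]
  simp only [toReal_betaPDF hu hv]

theorem integral_betaMeasure (hu : 0 < u) (hv : 0 < v) (g : ℝ → E) :
    ∫ x, g x ∂betaMeasure u v = ∫ x, betaPDFReal u v x • g x := by
  rw [betaMeasure, integral_withDensity_eq_integral_toReal_smul (measurable_betaPDF u v)
    (.of_forall fun _ ↦ ENNReal.ofReal_lt_top)]
  simp only [toReal_betaPDF hu hv]

theorem betaPDFReal_mul_rpow_mul_rpow (hus : 0 < u + s) (hvt : 0 < v + t) (x : ℝ) :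
    betaPDFReal u v x * (x ^ s * (1 - x) ^ t) =
      beta (u + s) (v + t) / beta u v * betaPDFReal (u + s) (v + t) x := by
  have hB := (beta_pos hus hvt).ne'
  by_cases hx : 0 < x ∧ x < 1
  · rw [betaPDFReal, betaPDFReal, if_pos hx, if_pos hx, add_sub_right_comm, add_sub_right_comm,
      Real.rpow_add hx.1, Real.rpow_add (sub_pos.2 hx.2)]
    field_simp
  · rw [betaPDFReal, betaPDFReal, if_neg hx, if_neg hx, zero_mul, mul_zero]

theorem integrable_rpow_mul_rpow_betaMeasure (hu : 0 < u) (hv : 0 < v) (hus : 0 < u + s)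
    (hvt : 0 < v + t) : Integrable (fun x ↦ x ^ s * (1 - x) ^ t) (betaMeasure u v) := by
  have := isProbabilityMeasureBeta hus hvt
  have hone := (integrable_betaMeasure_iff hus hvt).1 (integrable_const (1 : ℝ))
  simp only [smul_eq_mul, mul_one] at hone
  simpa only [integrable_betaMeasure_iff hu hv, smul_eq_mul,
    betaPDFReal_mul_rpow_mul_rpow hus hvt] using hone.const_mul _

theorem integral_rpow_mul_rpow_smul_betaMeasure (hu : 0 < u) (hv : 0 < v) (hus : 0 < u + s)
    (hvt : 0 < v + t) (g : ℝ → E) :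
    ∫ x, (x ^ s * (1 - x) ^ t) • g x ∂betaMeasure u v =
      (beta (u + s) (v + t) / beta u v) • ∫ x, g x ∂betaMeasure (u + s) (v + t) := by
  rw [integral_betaMeasure hu hv, integral_betaMeasure hus hvt, ← integral_smul]
  refine integral_congr_ae (.of_forall fun x ↦ ?_)
  dsimp only
  rw [smul_smul, betaPDFReal_mul_rpow_mul_rpow hus hvt, mul_smul]

theorem integral_rpow_mul_rpow_betaMeasure (hu : 0 < u) (hv : 0 < v) (hus : 0 < u + s)
    (hvt : 0 < v + t) :
    ∫ x, x ^ s * (1 - x) ^ t ∂betaMeasure u v = beta (u + s) (v + t) / beta u v := by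
  have := isProbabilityMeasureBeta hus hvt
  simpa using integral_rpow_mul_rpow_smul_betaMeasure hu hv hus hvt fun _ ↦ (1 : ℝ)

theorem integral_betaMeasure_anti_right_of_monotoneOn {v' : ℝ} (hu : 0 < u) (hv : 0 < v)
    (hvv' : v ≤ v') {f : ℝ → ℝ} (hf : MonotoneOn f (Ioo 0 1))
    (hint : Integrable f (betaMeasure u v)) :
    ∫ x, f x ∂betaMeasure u v' ≤ ∫ x, f x ∂betaMeasure u v := by
  obtain ⟨d, hd, rfl⟩ : ∃ d, 0 ≤ d ∧ v' = v + d := ⟨v' - v, by linarith, by ring⟩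
  have := isProbabilityMeasureBeta hu hv
  have hvd : 0 < v + d := by positivity
  have hw_int : Integrable (fun x ↦ (1 - x) ^ d) (betaMeasure u v) := by
    simpa using integrable_rpow_mul_rpow_betaMeasure (s := 0) hu hv (by simpa) hvd
  have hw_bdd : ∀ᵐ x ∂betaMeasure u v, ‖(1 - x) ^ d‖ ≤ 1 :=
    (ae_betaMeasure_mem_Ioo u v).mono fun x hx ↦ by
      have hx1 : 0 ≤ 1 - x := sub_nonneg.2 hx.2.le
      rw [Real.norm_of_nonneg (Real.rpow_nonneg hx1 d)]
      exact Real.rpow_le_one hx1 (by linarith [hx.1]) hd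
  have hw_anti : AntitoneOn (fun x : ℝ ↦ (1 - x) ^ d) (Ioo 0 1) := fun x _ y hy hxy ↦
    Real.rpow_le_rpow (sub_nonneg.2 hy.2.le) (by linarith) hd
  have chebyshev := integral_mul_le_integral_mul_integral_of_antivaryOn
    (hf.antivaryOn hw_anti).symm (ae_betaMeasure_mem_Ioo u v) hw_int hint
    (hint.bdd_mul hw_int.aestronglyMeasurable hw_bdd)
  have tilt := integral_rpow_mul_rpow_smul_betaMeasure (s := 0) hu hv (by simpa) hvd f
  have mass := integral_rpow_mul_rpow_betaMeasure (s := 0) hu hv (by simpa) hvd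
  simp only [Real.rpow_zero, one_mul, add_zero, smul_eq_mul] at tilt mass
  rw [tilt, mass] at chebyshev
  exact le_of_mul_le_mul_left chebyshev (div_pos (beta_pos hu hvd) (beta_pos hu hv))

end BetaMeasure

section NegativeBinomial

variable {r : ℝ}

/-- The generalised binomial coefficient `(y + r - 1).choose y` of the negative binomial
distribution with real dispersion parameter `r`, written with Gamma functions. -/
noncomputable def negBinCoeff (r : ℝ) (y : ℕ) : ℝ :=
  Real.Gamma (y + r) / (Real.Gamma (y + 1) * Real.Gamma r)

/-- The probability that a negative binomial variable with dispersion parameter `r` and success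
probability `p` equals `y`; the variable counts failures. The probability `p` comes last because it
is the variable to be mixed over. -/
noncomputable def negBinPMF (r : ℝ) (y : ℕ) (p : ℝ) : ℝ :=
  negBinCoeff r y * (p ^ r * (1 - p) ^ y)

/-- The probability that a negative binomial variable with dispersion parameter `r` and success
probability `p` is at most `z`. -/
noncomputable def negBinCDF (r : ℝ) (z : ℕ) (p : ℝ) : ℝ :=
  ∑ y ∈ Finset.range (z + 1), negBinPMF r y p

theorem negBinCoeff_pos (hr : 0 < r) (y : ℕ) : 0 < negBinCoeff r y := by
  have hyr : 0 < (y : ℝ) + r := add_pos_of_nonneg_of_pos y.cast_nonneg hr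
  exact div_pos (Real.Gamma_pos_of_pos hyr)
    (mul_pos (Real.Gamma_pos_of_pos y.cast_add_one_pos) (Real.Gamma_pos_of_pos hr))

theorem negBinCoeff_zero (hr : 0 < r) : negBinCoeff r 0 = 1 := by
  simp [negBinCoeff, (Real.Gamma_pos_of_pos hr).ne']

theorem add_one_mul_negBinCoeff_succ (hr : 0 < r) (y : ℕ) :
    (y + 1) * negBinCoeff r (y + 1) = (y + r) * negBinCoeff r y := by
  have hy : (y : ℝ) + 1 ≠ 0 := by positivity
  unfold negBinCoeff
  push_cast
  rw [add_right_comm (y : ℝ) 1 r, Real.Gamma_add_one (s := y + r) (by positivity),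
    Real.Gamma_add_one hy]
  field_simp

theorem hasDerivAt_negBinCDF (hr : 0 < r) (z : ℕ) {p : ℝ} (hp : 0 < p) :
    HasDerivAt (negBinCDF r z) ((z + r) * negBinCoeff r z * (p ^ (r - 1) * (1 - p) ^ z)) p := by
  have hpow : HasDerivAt (fun p : ℝ ↦ p ^ r) (r * p ^ (r - 1)) p :=
    Real.hasDerivAt_rpow_const (Or.inl hp.ne')
  unfold negBinCDF negBinPMF
  induction z with
  | zero => simpa [negBinCoeff_zero hr] using hpow
  | succ z ih =>
    simp only [Finset.sum_range_succ _ (z + 1)]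
    have hq : HasDerivAt (fun p : ℝ ↦ (1 - p) ^ (z + 1)) (-((z + 1) * (1 - p) ^ z)) p := by
      simpa using ((hasDerivAt_id p).const_sub 1).fun_pow (z + 1)
    refine (ih.add ((hpow.mul hq).const_mul (negBinCoeff r (z + 1)))).congr_deriv ?_
    have hpr : p ^ r = p ^ (r - 1) * p := by rw [← Real.rpow_add_one hp.ne', sub_add_cancel]
    rw [← add_one_mul_negBinCoeff_succ hr z, hpr]
    push_cast
    ring

theorem monotoneOn_negBinCDF (hr : 0 < r) (z : ℕ) : MonotoneOn (negBinCDF r z) (Ioo 0 1) := by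
  have hderiv : ∀ p ∈ Ioo (0 : ℝ) 1, HasDerivAt (negBinCDF r z) _ p :=
    fun p hp ↦ hasDerivAt_negBinCDF hr z hp.1
  refine monotoneOn_of_hasDerivWithinAt_nonneg (convex_Ioo 0 1)
    (fun p hp ↦ (hderiv p hp).continuousAt.continuousWithinAt)
    (fun p hp ↦ (hderiv p (interior_subset hp)).hasDerivWithinAt) fun p hp ↦ ?_
  have hp0 : 0 < p := (interior_subset hp).1
  have hp1 : 0 < 1 - p := sub_pos.2 (interior_subset hp).2
  have := negBinCoeff_pos hr z
  positivity

end NegativeBinomial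

section Mixture

variable {r a b lam : ℝ}

theorem integrable_negBinPMF_betaMeasure (hr : 0 < r) (ha : 0 < a) (hb : 0 < b) (y : ℕ) :
    Integrable (negBinPMF r y) (betaMeasure a b) := by
  unfold negBinPMF
  simp only [← Real.rpow_natCast]
  exact (integrable_rpow_mul_rpow_betaMeasure ha hb (by positivity) (by positivity)).const_mul _

theorem integral_negBinPMF_betaMeasure (hr : 0 < r) (ha : 0 < a) (hb : 0 < b) (y : ℕ) :
    ∫ p, negBinPMF r y p ∂betaMeasure a b =
      negBinCoeff r y * (beta (a + r) (b + y) / beta a b) := by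
  simp only [negBinPMF, ← Real.rpow_natCast, integral_const_mul]
  rw [integral_rpow_mul_rpow_betaMeasure ha hb (by positivity) (by positivity)]

theorem integrable_negBinCDF_betaMeasure (hr : 0 < r) (ha : 0 < a) (hb : 0 < b) (z : ℕ) :
    Integrable (negBinCDF r z) (betaMeasure a b) :=
  integrable_finsetSum _ fun y _ ↦ integrable_negBinPMF_betaMeasure hr ha hb y

theorem bnbPmf_eq_integral_negBinPMF (hr : 0 < r) (ha : 1 < a) (hlam : 0 < lam) (y : ℕ) :
    bnbPmf lam r a y = ∫ p, negBinPMF r y p ∂betaMeasure a ((a - 1) * lam / r) := by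
  have hb : 0 < (a - 1) * lam / r := div_pos (mul_pos (sub_pos.2 ha) hlam) hr
  exact (integral_negBinPMF_betaMeasure hr (zero_lt_one.trans ha) hb y).symm

theorem sum_bnbPmf_eq_integral_negBinCDF (hr : 0 < r) (ha : 1 < a) (hlam : 0 < lam) (z : ℕ) :
    ∑ y ∈ Finset.range (z + 1), bnbPmf lam r a y =
      ∫ p, negBinCDF r z p ∂betaMeasure a ((a - 1) * lam / r) := by
  have hb : 0 < (a - 1) * lam / r := div_pos (mul_pos (sub_pos.2 ha) hlam) hr
  simp only [bnbPmf_eq_integral_negBinPMF hr ha hlam]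
  exact (integral_finsetSum _ fun y _ ↦
    integrable_negBinPMF_betaMeasure hr (zero_lt_one.trans ha) hb y).symm

end Mixture

theorem bnb_stochastic_order (r a lam1 lam2 : ℝ) (hr : 0 < r) (ha : 1 < a)
    (h2 : 0 < lam2) (h12 : lam2 ≤ lam1) (z : ℕ) :
    ∑ y ∈ Finset.range (z + 1), bnbPmf lam1 r a y ≤
      ∑ y ∈ Finset.range (z + 1), bnbPmf lam2 r a y := by
  have ha0 : 0 < a := zero_lt_one.trans ha
  have hb : 0 < (a - 1) * lam2 / r := div_pos (mul_pos (sub_pos.2 ha) h2) hr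
  have hle : (a - 1) * lam2 / r ≤ (a - 1) * lam1 / r := by gcongr
  rw [sum_bnbPmf_eq_integral_negBinCDF hr ha (h2.trans_le h12),
    sum_bnbPmf_eq_integral_negBinCDF hr ha h2]
  exact integral_betaMeasure_anti_right_of_monotoneOn ha0 hb hle (monotoneOn_negBinCDF hr z)
    (integrable_negBinCDF_betaMeasure hr ha0 hb z)
end

section
/- For every fixed y ∈ ℕ, λ > 0 and r > 0, as the tail parameter diverges the beta negative binomial pmf converges to the negative binomial pmf with dispersion r and success probability λ/(r+λ): lim_{α→∞} p(y; λ, r, α) = (Γ(y+r)/(Γ(y+1)Γ(r))) · (r/(r+λ))^r · (λ/(r+λ))^y. -/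
/-!
Log-convexity of `Γ` gives Wendel's inequalities
`x * (x + s) ^ (s - 1) ≤ Γ (x + s) / Γ x ≤ x ^ s` for `0 ≤ s ≤ 1`, hence
`Γ (x + s) / Γ x ∼ x ^ s` as `x → ∞`; the functional equation carries this to every real `s`.
A quotient of Beta functions is a product of three such Gamma quotients, so along `b ∼ c a → ∞`
one has `B(a + s, b + t) / B(a, b) ∼ a ^ s * (c a) ^ t / ((1 + c) a) ^ (s + t)`,
in which the powers of `a` cancel. The pmf is the case `c = lam / r`, `s = r`, `t = y`.
-/

open Filter Topology Asymptotics Real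

theorem isEquivalent_rpow_of_eventually_nonneg {ι : Type*} {l : Filter ι} {u v : ι → ℝ}
    (huv : u ~[l] v) (hv : ∀ᶠ i in l, 0 ≤ v i) (p : ℝ) :
    (fun i ↦ u i ^ p) ~[l] fun i ↦ v i ^ p := by
  have hv_abs : v =ᶠ[l] |v| := hv.mono fun i hi ↦ (abs_of_nonneg hi).symm
  exact ((huv.congr_right hv_abs).rpow (abs_nonneg v)).congr_right
    (hv_abs.symm.fun_comp (· ^ p))

theorem isEquivalent_add_const_atTop (s : ℝ) : (fun x : ℝ ↦ x + s) ~[atTop] fun x ↦ x :=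
  IsEquivalent.refl.add_const_of_norm_tendsto_atTop tendsto_norm_atTop_atTop

section GammaQuotient

theorem Gamma_add_div_Gamma_le_rpow {x s : ℝ} (hx : 0 < x) (hs : s ∈ Set.Icc 0 1) :
    Gamma (x + s) / Gamma x ≤ x ^ s := by
  obtain ⟨hs₀, hs₁⟩ := hs
  have hΓ : 0 < Gamma x := Gamma_pos_of_pos hx
  rcases hs₀.eq_or_lt with rfl | hs₀
  · simp [hΓ.ne']
  rcases hs₁.eq_or_lt with rfl | hs₁
  · simp [Gamma_add_one hx.ne', hΓ.ne']
  rw [div_le_iff₀ hΓ]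
  calc Gamma (x + s) = Gamma ((1 - s) * x + s * (x + 1)) := by ring_nf
    _ ≤ Gamma x ^ (1 - s) * Gamma (x + 1) ^ s :=
      Gamma_mul_add_mul_le_rpow_Gamma_mul_rpow_Gamma hx (by positivity) (sub_pos.2 hs₁) hs₀
        (sub_add_cancel 1 s)
    _ = x ^ s * (Gamma x ^ (1 - s) * Gamma x ^ s) := by
      rw [Gamma_add_one hx.ne', mul_rpow hx.le hΓ.le, mul_left_comm]
    _ = x ^ s * Gamma x := by rw [← rpow_add hΓ, sub_add_cancel, rpow_one]

theorem mul_rpow_le_Gamma_add_div_Gamma {x s : ℝ} (hx : 0 < x) (hs : s ∈ Set.Icc 0 1) :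
    x * (x + s) ^ (s - 1) ≤ Gamma (x + s) / Gamma x := by
  have hxs : 0 < x + s := add_pos_of_pos_of_nonneg hx hs.1
  have hΓ : 0 < Gamma (x + s) := Gamma_pos_of_pos hxs
  have upper : Gamma (x + 1) / Gamma (x + s) ≤ (x + s) ^ (1 - s) := by
    simpa only [add_add_sub_cancel] using
      Gamma_add_div_Gamma_le_rpow hxs (Set.Icc.mem_iff_one_sub_mem.1 hs)
  rw [Gamma_add_one hx.ne', div_le_iff₀ hΓ] at upper
  rw [← neg_sub 1 s, rpow_neg hxs.le, ← div_eq_mul_inv,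
    div_le_div_iff₀ (rpow_pos_of_pos hxs _) (Gamma_pos_of_pos hx)]
  rwa [mul_comm (Gamma (x + s))]

theorem isEquivalent_Gamma_add_div_Gamma_of_mem_Icc {s : ℝ} (hs : s ∈ Set.Icc 0 1) :
    (fun x ↦ Gamma (x + s) / Gamma x) ~[atTop] fun x ↦ x ^ s := by
  have lower : (fun x ↦ x * (x + s) ^ (s - 1)) ~[atTop] fun x ↦ x ^ s := by
    refine (IsEquivalent.refl.mul (isEquivalent_rpow_of_eventually_nonneg
      (isEquivalent_add_const_atTop s) (eventually_ge_atTop 0) (s - 1))).congr_right ?_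
    filter_upwards [eventually_gt_atTop 0] with x hx
    simp [rpow_sub_one hx.ne', mul_div_cancel₀ _ hx.ne']
  have lower_div : Tendsto (fun x ↦ x * (x + s) ^ (s - 1) / x ^ s) atTop (𝓝 1) :=
    (isEquivalent_iff_tendsto_one <| (eventually_gt_atTop 0).mono
      fun x hx ↦ (rpow_pos_of_pos hx s).ne').1 lower
  refine isEquivalent_of_tendsto_one <|
    tendsto_of_tendsto_of_tendsto_of_le_of_le' lower_div tendsto_const_nhds ?_ ?_
  · filter_upwards [eventually_gt_atTop 0] with x hx
    exact div_le_div_of_nonneg_right (mul_rpow_le_Gamma_add_div_Gamma hx hs) (by positivity)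
  · filter_upwards [eventually_gt_atTop 0] with x hx
    exact div_le_one_of_le₀ (Gamma_add_div_Gamma_le_rpow hx hs) (by positivity)

theorem isEquivalent_Gamma_add_one_div_Gamma_iff {s : ℝ} :
    ((fun x ↦ Gamma (x + (s + 1)) / Gamma x) ~[atTop] fun x ↦ x ^ (s + 1)) ↔
      (fun x ↦ Gamma (x + s) / Gamma x) ~[atTop] fun x ↦ x ^ s := by
  have hadd := isEquivalent_add_const_atTop s
  have hΓ : (fun x ↦ Gamma (x + (s + 1)) / Gamma x) =ᶠ[atTop]
      fun x ↦ Gamma (x + s) / Gamma x * (x + s) := by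
    filter_upwards [eventually_gt_atTop (-s)] with x hx
    rw [← add_assoc, Gamma_add_one (neg_lt_iff_pos_add.1 hx).ne', mul_comm, mul_div_right_comm]
  have hpow : (fun x : ℝ ↦ x ^ (s + 1)) =ᶠ[atTop] fun x ↦ x ^ s * x := by
    filter_upwards [eventually_ne_atTop 0] with x hx using rpow_add_one hx s
  constructor <;> intro h
  · refine ((((h.congr_left hΓ).congr_right hpow).div hadd).congr_left ?_).congr_right ?_
    · filter_upwards [eventually_gt_atTop (-s)] with x hx
        using mul_div_cancel_right₀ _ (neg_lt_iff_pos_add.1 hx).ne'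
    · filter_upwards [eventually_ne_atTop 0] with x hx using mul_div_cancel_right₀ _ hx
  · exact ((h.mul hadd).congr_left hΓ.symm).congr_right hpow.symm

theorem isEquivalent_Gamma_add_div_Gamma (s : ℝ) :
    (fun x ↦ Gamma (x + s) / Gamma x) ~[atTop] fun x ↦ x ^ s := by
  have periodic : Function.Periodic
      (fun s : ℝ ↦ (fun x ↦ Gamma (x + s) / Gamma x) ~[atTop] fun x ↦ x ^ s) 1 :=
    fun _ ↦ propext isEquivalent_Gamma_add_one_div_Gamma_iff
  obtain ⟨t, ht, hst⟩ := periodic.exists_mem_Ico₀ one_pos s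
  exact hst.mpr (isEquivalent_Gamma_add_div_Gamma_of_mem_Icc (Set.Ico_subset_Icc_self ht))

end GammaQuotient

section BetaQuotient

theorem betaFn_add_div_betaFn (a b s t : ℝ) :
    betaFn (a + s) (b + t) / betaFn a b =
      Gamma (a + s) / Gamma a * (Gamma (b + t) / Gamma b) /
        (Gamma (a + b + (s + t)) / Gamma (a + b)) := by
  rw [betaFn, betaFn, add_add_add_comm]
  simp only [div_eq_mul_inv, mul_inv, inv_inv]
  ring

variable {ι : Type*} {l : Filter ι} {a b : ι → ℝ} {c : ℝ}

theorem isEquivalent_betaFn_add_div_betaFn (ha : Tendsto a l atTop) (hb : Tendsto b l atTop)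
    (s t : ℝ) :
    (fun i ↦ betaFn (a i + s) (b i + t) / betaFn (a i) (b i)) ~[l]
      fun i ↦ a i ^ s * b i ^ t / (a i + b i) ^ (s + t) := by
  simp only [betaFn_add_div_betaFn]
  exact (((isEquivalent_Gamma_add_div_Gamma s).comp_tendsto ha).mul
    ((isEquivalent_Gamma_add_div_Gamma t).comp_tendsto hb)).div
    ((isEquivalent_Gamma_add_div_Gamma (s + t)).comp_tendsto (ha.atTop_add_atTop hb))

theorem rpow_mul_rpow_div_rpow_add {x : ℝ} (hx : 0 < x) (hc : 0 < c) (s t : ℝ) :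
    x ^ s * (c * x) ^ t / ((1 + c) * x) ^ (s + t) = (1 / (1 + c)) ^ s * (c / (1 + c)) ^ t := by
  have hc₁ : 0 < 1 + c := by positivity
  rw [mul_rpow hc.le hx.le, mul_rpow hc₁.le hx.le, rpow_add hx, rpow_add hc₁,
    div_rpow zero_le_one hc₁.le, div_rpow hc.le hc₁.le, one_rpow]
  field_simp

theorem tendsto_betaFn_add_div_betaFn (ha : Tendsto a l atTop) (hc : 0 < c)
    (hb : b ~[l] fun i ↦ c * a i) (s t : ℝ) :
    Tendsto (fun i ↦ betaFn (a i + s) (b i + t) / betaFn (a i) (b i)) l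
      (𝓝 ((1 / (1 + c)) ^ s * (c / (1 + c)) ^ t)) := by
  have hca : Tendsto (fun i ↦ c * a i) l atTop := ha.const_mul_atTop hc
  have hpos : ∀ᶠ i in l, 0 < a i := ha.eventually_gt_atTop 0
  have hsum : (fun i ↦ a i + b i) ~[l] fun i ↦ (1 + c) * a i := by
    have hO : (fun i ↦ c * a i) =O[l] fun i ↦ (1 + c) * a i :=
      (isBigO_const_mul_self c a l).trans (isBigO_self_const_mul (by positivity) a l)
    refine (hb.isLittleO.trans_isBigO hO).congr_left fun i ↦ ?_
    simp only [Pi.sub_apply]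
    ring
  have hpow : (fun i ↦ a i ^ s * b i ^ t / (a i + b i) ^ (s + t)) ~[l]
      fun i ↦ a i ^ s * (c * a i) ^ t / ((1 + c) * a i) ^ (s + t) := by
    refine (IsEquivalent.refl.mul (isEquivalent_rpow_of_eventually_nonneg hb ?_ t)).div
      (isEquivalent_rpow_of_eventually_nonneg hsum ?_ (s + t)) <;>
      filter_upwards [hpos] with i hi <;> positivity
  refine ((isEquivalent_betaFn_add_div_betaFn ha (hb.symm.tendsto_atTop hca) s t).trans
    hpow).symm.tendsto_nhds (tendsto_const_nhds.congr' ?_)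
  filter_upwards [hpos] with i hi using (rpow_mul_rpow_div_rpow_add hi hc s t).symm

end BetaQuotient

theorem bnb_tendsto_negBinomial (lam r : ℝ) (hlam : 0 < lam) (hr : 0 < r) (y : ℕ) :
    Filter.Tendsto (fun a : ℝ => bnbPmf lam r a y) Filter.atTop
      (nhds (Real.Gamma ((y : ℝ) + r) / (Real.Gamma ((y : ℝ) + 1) * Real.Gamma r) *
        (r / (r + lam)) ^ (r : ℝ) * (lam / (r + lam)) ^ (y : ℕ))) := by
  have hb : (fun a : ℝ ↦ (a - 1) * lam / r) ~[atTop] fun a ↦ lam / r * a := by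
    refine (IsEquivalent.refl (u := fun _ ↦ lam / r)).mul
      (isEquivalent_add_const_atTop (-1)) |>.congr_left (.of_forall fun a ↦ ?_)
    simp only [Pi.mul_apply]
    ring
  have hp : 1 / (1 + lam / r) = r / (r + lam) := by field_simp
  have hq : lam / r / (1 + lam / r) = lam / (r + lam) := by field_simp
  have hbeta := tendsto_betaFn_add_div_betaFn tendsto_id (div_pos hlam hr) hb r y
  rw [hp, hq, rpow_natCast] at hbeta
  rw [mul_assoc]
  exact hbeta.const_mul _
end

section
/- For every z > 0 and c ≥ 0, the trigamma function satisfies 0 ≤ ψ₁(z) − ψ₁(z+c) ≤ (c+1)/z². -/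
noncomputable def digamma (x : ℝ) : ℝ := deriv (fun t => Real.log (Real.Gamma t)) x

noncomputable def trigamma (x : ℝ) : ℝ := deriv digamma x

/-!
Squeezing the digamma function between `log x - 1 / x` and `log x` and telescoping its functional
equation gives the series `ψ₁(x) = ∑ 1 / (x + n) ^ 2`. Hence `ψ₁` is decreasing and convex with
`ψ₁(x) - ψ₁(x + 1) = 1 / x ^ 2`. By convexity the mean rate of decrease of `ψ₁` on
`[z + 1, z + 1 + c]` is at most that on `[z, z + 1]`, which is `1 / z ^ 2`, so that
`ψ₁(z) - ψ₁(z + c) ≤ ψ₁(z) - ψ₁(z + 1 + c) ≤ 1 / z ^ 2 + c / z ^ 2`.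
-/

open Filter Topology Set

theorem convexOn_of_hasSum {𝕜 E β ι : Type*} [Semiring 𝕜] [PartialOrder 𝕜] [AddCommMonoid E]
    [SMul 𝕜 E] [AddCommMonoid β] [PartialOrder β] [IsOrderedAddMonoid β] [TopologicalSpace β]
    [OrderClosedTopology β] [ContinuousAdd β] [DistribSMul 𝕜 β] [ContinuousConstSMul 𝕜 β]
    {s : Set E} {f : ι → E → β} {g : E → β} (hs : Convex 𝕜 s) (hf : ∀ i, ConvexOn 𝕜 s (f i))
    (hg : ∀ x ∈ s, HasSum (fun i => f i x) (g x)) : ConvexOn 𝕜 s g :=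
  ⟨hs, fun x hx y hy a b ha hb hab =>
    hasSum_le (fun i => (hf i).2 hx hy ha hb hab) (hg _ (hs hx hy ha hb hab))
      (((hg x hx).const_smul a).add ((hg y hy).const_smul b))⟩

theorem summable_one_div_add_nat_sq (x : ℝ) : Summable fun n : ℕ => 1 / (x + n) ^ 2 := by
  simpa [add_comm x] using (Real.summable_one_div_nat_add_rpow x 2).2 one_lt_two

theorem convexOn_one_div_add_sq {a : ℝ} (ha : 0 ≤ a) :
    ConvexOn ℝ (Ioi 0) fun x : ℝ => 1 / (x + a) ^ 2 := by
  have h : ConvexOn ℝ (Ioi 0) fun x : ℝ => 1 / x ^ 2 := by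
    simpa [zpow_neg] using convexOn_zpow (𝕜 := ℝ) (-2)
  exact (h.translate_left a).subset (fun _ hx => add_pos_of_nonneg_of_pos ha hx) (convex_Ioi 0)

theorem differentiableAt_log_Gamma {x : ℝ} (hx : 0 < x) :
    DifferentiableAt ℝ (fun t => Real.log (Real.Gamma t)) x :=
  (Real.differentiableOn_Gamma_Ioi.differentiableAt (Ioi_mem_nhds hx)).log
    (Real.Gamma_pos_of_pos hx).ne'

theorem log_Gamma_add_one {x : ℝ} (hx : 0 < x) :
    Real.log (Real.Gamma (x + 1)) = Real.log (Real.Gamma x) + Real.log x := by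
  rw [Real.Gamma_add_one hx.ne', Real.log_mul hx.ne' (Real.Gamma_pos_of_pos hx).ne', add_comm]

theorem slope_log_Gamma_add_one {x : ℝ} (hx : 0 < x) :
    slope (fun t => Real.log (Real.Gamma t)) x (x + 1) = Real.log x := by
  simp [slope_def_field, log_Gamma_add_one hx]

theorem digamma_add_one {x : ℝ} (hx : 0 < x) : digamma (x + 1) = digamma x + 1 / x := by
  have hrec : (fun t => Real.log (Real.Gamma (t + 1))) =ᶠ[𝓝 x]
      fun t => Real.log (Real.Gamma t) + Real.log t := by
    filter_upwards [Ioi_mem_nhds hx] with t ht using log_Gamma_add_one ht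
  calc digamma (x + 1) = deriv (fun t => Real.log (Real.Gamma (t + 1))) x :=
        (deriv_comp_add_const (f := fun t => Real.log (Real.Gamma t)) 1 x).symm
    _ = digamma x + deriv Real.log x := by
        rw [hrec.deriv_eq,
          deriv_fun_add (differentiableAt_log_Gamma hx) (Real.differentiableAt_log hx.ne'), digamma]
    _ = digamma x + 1 / x := by rw [Real.deriv_log, one_div]

theorem digamma_le_log {x : ℝ} (hx : 0 < x) : digamma x ≤ Real.log x :=
  (Real.convexOn_log_Gamma.deriv_le_slope hx (add_pos hx one_pos) (lt_add_one x)
    (differentiableAt_log_Gamma hx)).trans_eq (slope_log_Gamma_add_one hx)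

theorem log_sub_one_div_le_digamma {x : ℝ} (hx : 0 < x) : Real.log x - 1 / x ≤ digamma x := by
  have hx' : 0 < x + 1 := add_pos hx one_pos
  have hlog : Real.log x ≤ digamma (x + 1) :=
    (slope_log_Gamma_add_one hx).symm.trans_le <| Real.convexOn_log_Gamma.slope_le_deriv hx hx'
      (lt_add_one x) (differentiableAt_log_Gamma hx')
  rwa [digamma_add_one hx, ← sub_le_iff_le_add] at hlog

theorem tendsto_digamma_sub_log_atTop :
    Tendsto (fun x => digamma x - Real.log x) atTop (𝓝 0) := by
  have hinv : Tendsto (fun x : ℝ => -(1 / x)) atTop (𝓝 0) := by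
    simpa using (tendsto_inv_atTop_zero (𝕜 := ℝ)).neg
  refine tendsto_of_tendsto_of_tendsto_of_le_of_le' hinv tendsto_const_nhds ?_ ?_
  · filter_upwards [eventually_gt_atTop 0] with x hx
    linarith [log_sub_one_div_le_digamma hx]
  · filter_upwards [eventually_gt_atTop 0] with x hx using sub_nonpos.2 (digamma_le_log hx)

theorem tendsto_digamma_add_sub_log_atTop (a : ℝ) :
    Tendsto (fun x => digamma (a + x) - Real.log x) atTop (𝓝 0) := by
  have hshift := tendsto_digamma_sub_log_atTop.comp
    (tendsto_atTop_add_const_left atTop a tendsto_id)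
  simpa [Function.comp_def, add_comm a] using hshift.add (Real.tendsto_log_comp_add_sub_log a)

theorem sum_range_one_div_add {x : ℝ} (hx : 0 < x) (N : ℕ) :
    ∑ n ∈ Finset.range N, 1 / (x + n) = digamma (x + N) - digamma x := by
  induction N with
  | zero => simp
  | succ N ih =>
    rw [Finset.sum_range_succ, ih, Nat.cast_succ, ← add_assoc, digamma_add_one (by positivity)]
    ring

theorem tendsto_sum_range_one_div_sub_one_div {x y : ℝ} (hx : 0 < x) (hy : 0 < y) :
    Tendsto (fun N : ℕ => ∑ n ∈ Finset.range N, (1 / (x + n) - 1 / (y + n))) atTop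
      (𝓝 (digamma y - digamma x)) := by
  have hlim (a : ℝ) : Tendsto (fun N : ℕ => digamma (a + N) - Real.log N) atTop (𝓝 0) :=
    (tendsto_digamma_add_sub_log_atTop a).comp tendsto_natCast_atTop_atTop
  have h := ((hlim x).sub (hlim y)).const_add (digamma y - digamma x)
  rw [sub_zero, add_zero] at h
  refine h.congr fun N => ?_
  rw [Finset.sum_sub_distrib, sum_range_one_div_add hx, sum_range_one_div_add hy]
  ring

theorem hasSum_digamma_sub {x y : ℝ} (hx : 0 < x) (hy : 0 < y) :
    HasSum (fun n : ℕ => 1 / (x + n) - 1 / (y + n)) (digamma y - digamma x) := by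
  wlog hxy : x ≤ y generalizing x y
  · simpa using (this hy hx (le_of_not_ge hxy)).neg
  refine (hasSum_iff_tendsto_nat_of_nonneg (fun n => sub_nonneg.2 ?_) _).2
    (tendsto_sum_range_one_div_sub_one_div hx hy)
  gcongr

theorem hasDerivAt_const_sub_one_div_add (b : ℝ) {a y : ℝ} (h : y + a ≠ 0) :
    HasDerivAt (fun t => b - 1 / (t + a)) (1 / (y + a) ^ 2) y := by
  simpa [neg_div] using (((hasDerivAt_id y).add_const a).fun_inv h).const_sub b

theorem hasDerivAt_digamma {x : ℝ} (hx : 0 < x) :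
    HasDerivAt digamma (∑' n : ℕ, 1 / (x + n) ^ 2) x := by
  have hpos {y : ℝ} (hy : y ∈ Ioi (x / 2)) : 0 < y := (half_pos hx).trans hy
  have hx' : x ∈ Ioi (x / 2) := half_lt_self hx
  have hderiv (n : ℕ) (y : ℝ) (hy : y ∈ Ioi (x / 2)) :
      HasDerivAt (fun t : ℝ => 1 / (x + n) - 1 / (t + n)) (1 / (y + n) ^ 2) y :=
    hasDerivAt_const_sub_one_div_add _ (add_pos_of_pos_of_nonneg (hpos hy) n.cast_nonneg).ne'
  have hbound (n : ℕ) (y : ℝ) (hy : y ∈ Ioi (x / 2)) :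
      ‖1 / (y + n) ^ 2‖ ≤ 1 / (x / 2 + n) ^ 2 := by
    rw [Real.norm_of_nonneg (by positivity)]
    gcongr
    exact le_of_lt hy
  have hseries := hasDerivAt_tsum_of_isPreconnected (summable_one_div_add_nat_sq (x / 2))
    isOpen_Ioi isPreconnected_Ioi hderiv hbound hx' (hasSum_digamma_sub hx hx).summable hx'
  refine (hseries.const_add (digamma x)).congr_of_eventuallyEq ?_
  filter_upwards [Ioi_mem_nhds hx] with y hy
  rw [(hasSum_digamma_sub hx hy).tsum_eq, add_sub_cancel]

theorem hasSum_trigamma {x : ℝ} (hx : 0 < x) :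
    HasSum (fun n : ℕ => 1 / (x + n) ^ 2) (trigamma x) := by
  rw [trigamma, (hasDerivAt_digamma hx).deriv]
  exact (summable_one_div_add_nat_sq x).hasSum

theorem antitoneOn_trigamma : AntitoneOn trigamma (Ioi 0) := by
  intro x hx y hy hxy
  refine hasSum_le (fun n => ?_) (hasSum_trigamma hy) (hasSum_trigamma hx)
  have : 0 < x := hx
  gcongr

theorem convexOn_trigamma : ConvexOn ℝ (Ioi 0) trigamma :=
  convexOn_of_hasSum (convex_Ioi 0) (fun n : ℕ => convexOn_one_div_add_sq n.cast_nonneg)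
    fun _ => hasSum_trigamma

theorem trigamma_add_one {x : ℝ} (hx : 0 < x) : trigamma (x + 1) = trigamma x - 1 / x ^ 2 := by
  have htail := (hasSum_nat_add_iff' 1).2 (hasSum_trigamma hx)
  refine (hasSum_trigamma (add_pos hx one_pos)).unique ?_
  simpa [add_assoc, add_comm (1 : ℝ)] using htail

theorem trigamma_add_one_sub_le {z c : ℝ} (hz : 0 < z) (hc : 0 ≤ c) :
    trigamma (z + 1) - trigamma (z + 1 + c) ≤ c / z ^ 2 := by
  obtain rfl | hc := hc.eq_or_lt
  · simp
  have hslope := convexOn_trigamma.slope_mono_adjacent (x := z) (y := z + 1) (z := z + 1 + c) hz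
    (show 0 < z + 1 + c by positivity) (lt_add_one z) (lt_add_of_pos_right _ hc)
  rw [add_sub_cancel_left, add_sub_cancel_left, div_one, le_div_iff₀ hc] at hslope
  have hrec : trigamma (z + 1) - trigamma z = -(1 / z ^ 2) := by
    rw [trigamma_add_one hz]
    ring
  rw [hrec] at hslope
  linear_combination hslope

theorem trigamma_diff_bounds (z c : ℝ) (hz : 0 < z) (hc : 0 ≤ c) :
    0 ≤ trigamma z - trigamma (z + c) ∧ trigamma z - trigamma (z + c) ≤ (c + 1) / z ^ 2 := by
  have hzc : 0 < z + c := add_pos_of_pos_of_nonneg hz hc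
  refine ⟨sub_nonneg.2 (antitoneOn_trigamma hz hzc (le_add_of_nonneg_right hc)), ?_⟩
  have hanti : trigamma (z + 1 + c) ≤ trigamma (z + c) :=
    antitoneOn_trigamma hzc (show 0 < z + 1 + c by positivity) (by linarith)
  calc trigamma z - trigamma (z + c)
      ≤ trigamma z - trigamma (z + 1 + c) := sub_le_sub_left hanti _
    _ = 1 / z ^ 2 + (trigamma (z + 1) - trigamma (z + 1 + c)) := by
        rw [trigamma_add_one hz]
        ring
    _ ≤ 1 / z ^ 2 + c / z ^ 2 := by gcongr; exact trigamma_add_one_sub_le hz hc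
    _ = (c + 1) / z ^ 2 := by ring
end

section
/- For every λ > 0, r > 0 and α > 1, the BNB score has mean zero under the beta negative binomial distribution: ∑_{y=0}^{∞} s(y, λ) · p(y; λ, r, α) = 0. -/
noncomputable def bnbScore (r a lam y : ℝ) : ℝ :=
  ((a - 1) / r) * lam *
    (digamma (((a - 1) / r) * lam + y) + digamma (((a - 1) / r) * lam + a) -
      digamma (((a - 1) / r) * lam + y + a + r) - digamma (((a - 1) / r) * lam))

/-!
A beta negative binomial law is a negative binomial law whose success probability `p` has a
`Beta(a, b)` law, `b = (a - 1) lam / r`. Integrating the negative binomial series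
`∑ c_y p ^ r (1 - p) ^ y = 1` against this law gives `∑ c_y B(a + r, b + y) = B(a, b)` for all
`b > 0`. Each term is convex in `b`, so this identity may be differentiated term by term: summing
the tangent line inequalities of the terms shows that the sum of their derivatives is a subgradient
of `B(a, ·)`, whose only subgradient at `b` is its derivative. As `B(c, ·)` has logarithmic
derivative `ψ(x) - ψ(c + x)`, the differentiated identity divided by `B(a, b)` says that the score
has mean zero.
-/

open MeasureTheory Set Filter Topology

section ConvexSeries

variable {s : Set ℝ} {x z : ℝ}

theorem add_mul_sub_le_of_convexOn {f : ℝ → ℝ} {f' : ℝ} (hf : ConvexOn ℝ s f) (hx : x ∈ s)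
    (hz : z ∈ s) (hf' : HasDerivAt f f' x) : f x + f' * (z - x) ≤ f z := by
  rcases lt_trichotomy x z with hxz | rfl | hzx
  · have h := hf.le_slope_of_hasDerivAt hx hz hxz hf'
    rw [slope_def_field, le_div_iff₀ (sub_pos.2 hxz)] at h
    linarith
  · simp
  · have h := hf.slope_le_of_hasDerivAt hz hx hzx hf'
    rw [slope_def_field, div_le_iff₀ (sub_pos.2 hzx)] at h
    linarith

variable {ι : Type*} {f : ι → ℝ → ℝ} {f' : ι → ℝ}

theorem summable_deriv_of_convexOn (hs : s ∈ 𝓝 x) (hconv : ∀ i, ConvexOn ℝ s (f i))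
    (hf : ∀ i, HasDerivAt (f i) (f' i) x) (hsum : ∀ z ∈ s, Summable fun i => f i z) :
    Summable f' := by
  obtain ⟨ε, hε, hball⟩ := Metric.nhds_basis_closedBall.mem_iff.1 hs
  have hx : x ∈ s := mem_of_mem_nhds hs
  have hright : x + ε ∈ s := hball (by simp [abs_of_pos hε])
  have hleft : x - ε ∈ s := hball (by simp [abs_of_pos hε])
  have hsumRight := (hsum _ hright).sub (hsum _ hx)
  have hsumLeft := (hsum _ hleft).sub (hsum _ hx)
  have hgap : Summable fun i => f i (x + ε) - f i x - ε * f' i := by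
    refine Summable.of_nonneg_of_le (fun i => ?_) (fun i => ?_) (hsumRight.add hsumLeft)
    · linarith [add_mul_sub_le_of_convexOn (hconv i) hx hright (hf i)]
    · linarith [add_mul_sub_le_of_convexOn (hconv i) hx hleft (hf i)]
  rw [← summable_mul_left_iff hε.ne']
  exact (hsumRight.sub hgap).congr fun i => by ring

theorem hasSum_deriv_of_convexOn {F : ℝ → ℝ} {F' : ℝ} (hs : s ∈ 𝓝 x)
    (hconv : ∀ i, ConvexOn ℝ s (f i)) (hf : ∀ i, HasDerivAt (f i) (f' i) x)
    (hsum : ∀ z ∈ s, HasSum (fun i => f i z) (F z)) (hF : HasDerivAt F F' x) :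
    HasSum f' F' := by
  have hx : x ∈ s := mem_of_mem_nhds hs
  have hf'sum := (summable_deriv_of_convexOn hs hconv hf fun z hz => (hsum z hz).summable).hasSum
  have hsubgradient : ∀ z ∈ s, F x + (∑' i, f' i) * (z - x) ≤ F z := fun z hz =>
    hasSum_le (fun i => add_mul_sub_le_of_convexOn (hconv i) hx hz (hf i))
      ((hsum x hx).add (hf'sum.mul_right (z - x))) (hsum z hz)
  have hmin : IsLocalMin (fun z => F z - (∑' i, f' i) * z) x := by
    filter_upwards [hs] with z hz
    linarith [hsubgradient z hz]
  have hzero := hmin.hasDerivAt_eq_zero (hF.sub ((hasDerivAt_id x).const_mul _))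
  rw [mul_one, sub_eq_zero] at hzero
  rwa [hzero]

end ConvexSeries

theorem hasSum_integral_of_nonneg {ι α : Type*} [Countable ι] [MeasurableSpace α] {μ : Measure α}
    {F : ι → α → ℝ} {f : α → ℝ} (hF_meas : ∀ i, AEStronglyMeasurable (F i) μ)
    (hF_nonneg : ∀ i, 0 ≤ᵐ[μ] F i) (hf : Integrable f μ)
    (hsum : ∀ᵐ t ∂μ, HasSum (fun i => F i t) (f t)) :
    HasSum (fun i => ∫ t, F i t ∂μ) (∫ t, f t ∂μ) := by
  refine hasSum_integral_of_dominated_convergence F hF_meas (fun i => ?_)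
    (hsum.mono fun t ht => ht.summable)
    (hf.congr (hsum.mono fun t ht => ht.tsum_eq.symm)) hsum
  filter_upwards [hF_nonneg i] with t ht using (Real.norm_of_nonneg ht).le

section GammaBeta

theorem ne_neg_natCast_of_pos_s13 {x : ℝ} (hx : 0 < x) (m : ℕ) : x ≠ -m :=
  ((neg_nonpos.2 m.cast_nonneg).trans_lt hx).ne'

theorem Gamma_add_natCast_div_Gamma {x : ℝ} (hx : ∀ m : ℕ, x ≠ -m) (n : ℕ) :
    Real.Gamma (x + n) / Real.Gamma x = (ascPochhammer ℝ n).eval x := by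
  induction n with
  | zero => simp [Real.Gamma_ne_zero hx]
  | succ n ih =>
    have hxn : x + n ≠ 0 := fun h => hx n (eq_neg_of_add_eq_zero_left h)
    rw [Nat.cast_succ, ← add_assoc, Real.Gamma_add_one hxn, mul_div_assoc, ih,
      ascPochhammer_succ_eval, mul_comm]

theorem hasDerivAt_Gamma_digamma {x : ℝ} (hx : ∀ m : ℕ, x ≠ -m) :
    HasDerivAt Real.Gamma (Real.Gamma x * digamma x) x := by
  have hΓ : HasDerivAt Real.Gamma (deriv Real.Gamma x) x :=
    (Real.differentiableAt_Gamma hx).hasDerivAt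
  rwa [digamma, (hΓ.log (Real.Gamma_ne_zero hx)).deriv, mul_div_cancel₀ _ (Real.Gamma_ne_zero hx)]

theorem hasDerivAt_betaFn_right {c x : ℝ} (hx : ∀ m : ℕ, x ≠ -m) (hcx : ∀ m : ℕ, c + x ≠ -m) :
    HasDerivAt (betaFn c) (betaFn c x * (digamma x - digamma (c + x))) x := by
  have hnum := (hasDerivAt_Gamma_digamma hx).const_mul (Real.Gamma c)
  have hden := (hasDerivAt_Gamma_digamma hcx).comp_const_add c x
  have hne := Real.Gamma_ne_zero hcx
  refine (hnum.div hden hne).congr_deriv ?_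
  rw [betaFn]
  field_simp

variable {u v : ℝ}

theorem ofReal_rpow_mul_one_sub_rpow {t : ℝ} (u v : ℝ) (ht : t ∈ Icc (0 : ℝ) 1) :
    ((t ^ (u - 1) * (1 - t) ^ (v - 1) : ℝ) : ℂ) =
      (t : ℂ) ^ ((u : ℂ) - 1) * (1 - (t : ℂ)) ^ ((v : ℂ) - 1) := by
  push_cast [Complex.ofReal_cpow ht.1, Complex.ofReal_cpow (sub_nonneg.2 ht.2)]
  rfl

theorem integrableOn_rpow_mul_one_sub_rpow (hu : 0 < u) (hv : 0 < v) :
    IntegrableOn (fun t : ℝ => t ^ (u - 1) * (1 - t) ^ (v - 1)) (Ioo 0 1) := by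
  have hconv := Complex.betaIntegral_convergent (u := u) (v := v) (by simpa) (by simpa)
  rw [intervalIntegrable_iff_integrableOn_Ioo_of_le zero_le_one] at hconv
  refine IntegrableOn.congr_fun (Integrable.re hconv) (fun t ht => ?_) measurableSet_Ioo
  rw [← ofReal_rpow_mul_one_sub_rpow u v (Ioo_subset_Icc_self ht)]
  exact Complex.ofReal_re _

theorem betaFn_eq_integral (hu : 0 < u) (hv : 0 < v) :
    betaFn u v = ∫ t in Ioo (0 : ℝ) 1, t ^ (u - 1) * (1 - t) ^ (v - 1) := by
  have hbeta : Complex.betaIntegral u v =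
      ((∫ t in Ioo (0 : ℝ) 1, t ^ (u - 1) * (1 - t) ^ (v - 1) : ℝ) : ℂ) := by
    rw [Complex.betaIntegral, intervalIntegral.integral_of_le zero_le_one,
      integral_Ioc_eq_integral_Ioo, ← integral_complex_ofReal]
    exact setIntegral_congr_fun measurableSet_Ioo fun t ht =>
      (ofReal_rpow_mul_one_sub_rpow u v (Ioo_subset_Icc_self ht)).symm
  rw [← Complex.ofReal_re (∫ t in Ioo (0 : ℝ) 1, _), ← hbeta]
  exact ProbabilityTheory.beta_eq_betaIntegralReal u v hu hv

theorem convexOn_betaFn_right (hu : 0 < u) : ConvexOn ℝ (Ioi 0) (betaFn u) := by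
  have hintegrand : ∀ t ∈ Ioo (0 : ℝ) 1,
      ConvexOn ℝ (Ioi 0) fun x : ℝ => t ^ (u - 1) * (1 - t) ^ (x - 1) := by
    intro t ht
    have hrpow := (convexOn_rpow_left (sub_pos.2 ht.2)).translate_left (-1)
    exact (hrpow.subset (subset_univ _) (convex_Ioi 0)).smul (Real.rpow_nonneg ht.1.le _)
  refine (integral_convexOn_of_integrand_ae (convex_Ioi 0)
    (ae_restrict_of_forall_mem measurableSet_Ioo hintegrand)
    fun x hx => integrableOn_rpow_mul_one_sub_rpow hu hx).congr ?_
  exact fun x hx => (betaFn_eq_integral hu hx).symm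

end GammaBeta

section NegBinomial

/-- The coefficient `Γ(y + r) / (y! Γ(r))` of the negative binomial distribution with dispersion
parameter `r`, in the shape in which it occurs in `bnbPmf`. -/
noncomputable def negBinomialCoeff (r : ℝ) (y : ℕ) : ℝ :=
  Real.Gamma (y + r) / (Real.Gamma (y + 1) * Real.Gamma r)

theorem negBinomialCoeff_nonneg {r : ℝ} (hr : 0 ≤ r) (y : ℕ) : 0 ≤ negBinomialCoeff r y := by
  have hΓ {x : ℝ} (hx : 0 ≤ x) : 0 ≤ Real.Gamma x := Real.Gamma_nonneg_of_nonneg hx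
  exact div_nonneg (hΓ (by positivity)) (mul_nonneg (hΓ (by positivity)) (hΓ hr))

theorem negBinomialCoeff_eq_multichoose {r : ℝ} (hr : ∀ m : ℕ, r ≠ -m) (y : ℕ) :
    negBinomialCoeff r y = Ring.multichoose r y := by
  have hfactorial : (y.factorial : ℝ) * Ring.multichoose r y = (ascPochhammer ℝ y).eval r := by
    rw [← nsmul_eq_mul, Ring.factorial_nsmul_multichoose_eq_ascPochhammer,
      Polynomial.ascPochhammer_smeval_eq_eval]
  rw [negBinomialCoeff, Real.Gamma_nat_eq_factorial, add_comm, mul_comm, ← div_div,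
    Gamma_add_natCast_div_Gamma hr, ← hfactorial, mul_div_cancel_left₀ _ (by positivity)]

theorem hasSum_negBinomialCoeff_mul_pow {r t : ℝ} (hr : ∀ m : ℕ, r ≠ -m) (ht : |t| < 1) :
    HasSum (fun y => negBinomialCoeff r y * t ^ y) ((1 - t) ^ (-r)) := by
  have hmem : t ∈ Metric.eball (0 : ℝ) 1 := by
    simpa [Metric.mem_eball, edist_dist, ENNReal.ofReal_lt_one] using ht
  have h := (Real.one_div_one_sub_rpow_hasFPowerSeriesOnBall_zero r).hasSum hmem
  rw [zero_add, one_div, ← Real.rpow_neg (by linarith [(abs_lt.1 ht).2])] at h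
  refine h.congr_fun fun y => ?_
  rw [FormalMultilinearSeries.ofScalars_apply_eq, ← Ring.multichoose_eq, smul_eq_mul,
    negBinomialCoeff_eq_multichoose hr]

end NegBinomial

section BetaNegBinomial

variable {r a b : ℝ}

theorem hasSum_negBinomialCoeff_mul_betaFn (hr : 0 < r) (ha : 0 < a) (hb : 0 < b) :
    HasSum (fun y : ℕ => negBinomialCoeff r y * betaFn (a + r) (b + y)) (betaFn a b) := by
  let F : ℕ → ℝ → ℝ := fun y p =>
    negBinomialCoeff r y * (p ^ (a + r - 1) * (1 - p) ^ (b + y - 1))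
  have hpointwise : ∀ p ∈ Ioo (0 : ℝ) 1,
      HasSum (fun y => F y p) (p ^ (a - 1) * (1 - p) ^ (b - 1)) := by
    rintro p ⟨hp0, hp1⟩
    have hseries := (hasSum_negBinomialCoeff_mul_pow (t := 1 - p) (ne_neg_natCast_of_pos_s13 hr)
      (abs_lt.2 ⟨by linarith, by linarith⟩)).mul_left (p ^ (a + r - 1) * (1 - p) ^ (b - 1))
    rw [sub_sub_cancel, mul_right_comm, ← Real.rpow_add hp0,
      show a + r - 1 + -r = a - 1 by ring] at hseries
    refine hseries.congr_fun fun y => ?_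
    simp only [F]
    rw [add_sub_right_comm b, Real.rpow_add_natCast (sub_pos.2 hp1).ne']
    ring
  have hF_nonneg : ∀ y, ∀ p ∈ Ioo (0 : ℝ) 1, 0 ≤ F y p := fun y p hp =>
    mul_nonneg (negBinomialCoeff_nonneg hr.le y)
      (mul_nonneg (Real.rpow_nonneg hp.1.le _) (Real.rpow_nonneg (sub_nonneg.2 hp.2.le) _))
  rw [betaFn_eq_integral ha hb]
  refine (hasSum_integral_of_nonneg (F := F)
    (fun y => Measurable.aestronglyMeasurable (by fun_prop))
    (fun y => ae_restrict_of_forall_mem measurableSet_Ioo (hF_nonneg y))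
    (integrableOn_rpow_mul_one_sub_rpow ha hb)
    (ae_restrict_of_forall_mem measurableSet_Ioo hpointwise)).congr_fun fun y => ?_
  rw [integral_const_mul, ← betaFn_eq_integral (by positivity) (by positivity)]

theorem hasSum_negBinomialCoeff_mul_betaFn_mul_digamma (hr : 0 < r) (ha : 0 < a) (hb : 0 < b) :
    HasSum (fun y : ℕ => negBinomialCoeff r y *
      (betaFn (a + r) (b + y) * (digamma (b + y) - digamma (a + r + (b + y)))))
      (betaFn a b * (digamma b - digamma (a + b))) := by
  have hconv (y : ℕ) :
      ConvexOn ℝ (Ioi 0) fun x : ℝ => negBinomialCoeff r y * betaFn (a + r) (x + y) := by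
    have hshift := (convexOn_betaFn_right (add_pos ha hr)).translate_left (y : ℝ)
    refine (hshift.subset (fun x (hx : 0 < x) => ?_) (convex_Ioi 0)).smul
      (negBinomialCoeff_nonneg hr.le y)
    exact add_pos_of_nonneg_of_pos y.cast_nonneg hx
  have hderiv {c x : ℝ} (hc : 0 < c) (hx : 0 < x) :
      HasDerivAt (betaFn c) (betaFn c x * (digamma x - digamma (c + x))) x :=
    hasDerivAt_betaFn_right (ne_neg_natCast_of_pos_s13 hx) (ne_neg_natCast_of_pos_s13 (add_pos hc hx))
  exact hasSum_deriv_of_convexOn (Ioi_mem_nhds hb) hconv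
    (fun y => ((hderiv (add_pos ha hr) (by positivity)).comp_add_const b y).const_mul _)
    (fun x hx => hasSum_negBinomialCoeff_mul_betaFn hr ha hx) (hderiv ha hb)

theorem hasSum_negBinomialCoeff_mul_betaFn_mul_score (hr : 0 < r) (ha : 0 < a) (hb : 0 < b) :
    HasSum (fun y : ℕ => negBinomialCoeff r y * betaFn (a + r) (b + y) *
      (digamma (b + y) + digamma (b + a) - digamma (b + y + a + r) - digamma b)) 0 := by
  have hsum := (hasSum_negBinomialCoeff_mul_betaFn_mul_digamma hr ha hb).add
    ((hasSum_negBinomialCoeff_mul_betaFn hr ha hb).mul_right (digamma (a + b) - digamma b))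
  rw [← mul_add, sub_add_sub_cancel', sub_self, mul_zero] at hsum
  refine hsum.congr_fun fun y => ?_
  rw [add_comm b a, show b + (y : ℝ) + a + r = a + r + (b + y) by ring]
  ring

end BetaNegBinomial

theorem bnb_score_mean_zero (lam r a : ℝ) (hlam : 0 < lam) (hr : 0 < r) (ha : 1 < a) :
    ∑' y : ℕ, bnbScore r a lam (y : ℝ) * bnbPmf lam r a y = 0 := by
  have ha0 : 0 < a := by linarith
  set b : ℝ := (a - 1) / r * lam with hb_def
  have hb : 0 < b := mul_pos (div_pos (by linarith) hr) hlam
  have hscore := (hasSum_negBinomialCoeff_mul_betaFn_mul_score hr ha0 hb).mul_left (b / betaFn a b)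
  rw [mul_zero] at hscore
  refine (hscore.congr_fun fun y => ?_).tsum_eq
  rw [bnbScore, bnbPmf, ← negBinomialCoeff, mul_div_right_comm, ← hb_def]
  ring
end
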